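/- arXiv:2602.21510 — 2 statements merged into one kernel-verified Lean document; each statement's English description precedes it below -/
import Mathlib

section
/- Let n ≥ 1, let X be a finite index set, and let {Π_x}_{x∈X} be a POVM on ℂ^{2ⁿ}: each Π_x is a positive semidefinite Hermitian 2ⁿ × 2ⁿ matrix, ∑_{x∈X} Π_x = I, and assume Tr[Π_x] > 0 for each x. For each a ∈ {1, …, 4ⁿ − 1} define F_{aa} := 2^{−n} ∑_{x∈X} (Tr[Π_x P_a])² / Tr[Π_x] (each Tr[Π_x P_a] is real). Then ∑_{a=1}^{4ⁿ−1} F_{aa} ≤ 2ⁿ − 1. -/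
open Matrix Kronecker BigOperators ComplexOrder

/-- The single-qubit Pauli X matrix. -/
def sigmaX : Matrix (Fin 2) (Fin 2) ℂ := !![0, 1; 1, 0]

/-- The single-qubit Pauli Z matrix. -/
def sigmaZ : Matrix (Fin 2) (Fin 2) ℂ := !![1, 0; 0, -1]

/-- The single-qubit Pauli operator `i^{a_x a_z} X^{a_x} Z^{a_z}`. -/
noncomputable def pauli1 (ax az : Bool) : Matrix (Fin 2) (Fin 2) ℂ :=
  (Complex.I ^ ((if ax then 1 else 0) * (if az then 1 else 0) : ℕ)) •
    (sigmaX ^ (if ax then (1 : ℕ) else 0) * sigmaZ ^ (if az then (1 : ℕ) else 0))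

/-- Index of an `n`-qubit Pauli operator: the pair `(a_x, a_z)` of bit strings
(the binary representation of `a ∈ {0, …, 4ⁿ − 1}`). -/
abbrev PauliIdx (n : ℕ) := (Fin n → Bool) × (Fin n → Bool)

/-- The index of the identity Pauli operator `P_0 = I`. -/
def pauliZero (n : ℕ) : PauliIdx n := (fun _ => false, fun _ => false)

/-- The `n`-qubit Pauli operator `P_a = ⨂_{k=1}^n i^{a_{x,k} a_{z,k}} X^{a_{x,k}} Z^{a_{z,k}}`,
the `n`-fold Kronecker product realized on the index set `Fin n → Fin 2`. -/
noncomputable def pauliOp {n : ℕ} (a : PauliIdx n) :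
    Matrix (Fin n → Fin 2) (Fin n → Fin 2) ℂ :=
  Matrix.of fun j k => ∏ l, pauli1 (a.1 l) (a.2 l) (j l) (k l)

/-- The symplectic inner product `⟨[a]₂, [b]₂⟩ = ∑_k (a_{x,k} b_{z,k} + a_{z,k} b_{x,k})`
of the binary representations of two Pauli indices. -/
def sympl {n : ℕ} (a b : PauliIdx n) : ℕ :=
  ∑ k, ((if a.1 k then 1 else 0) * (if b.2 k then 1 else 0)
      + (if a.2 k then 1 else 0) * (if b.1 k then 1 else 0))

/-!
The Pauli operators form an orthogonal operator basis: `∑_a P_a ⊗ P_a†` is `2ⁿ` times the swap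
operator, which is checked on one qubit and passes to tensor products. Parseval then gives
`∑_a |Tr[A P_a]|² = 2ⁿ ‖A‖²` in Hilbert–Schmidt norm. For `A` positive semidefinite, the `2 × 2`
principal minors show `‖A‖² ≤ (Tr A)²`, so removing the term `a = 0`, which is `(Tr A)²`, leaves at
most `(2ⁿ − 1) (Tr A)²`. Apply this to `A = Π_x`, divide by `Tr Π_x` and sum over `x`. The spectral
decomposition of `Π_x` is never needed.
-/

section PiKronecker

variable {ι R : Type*} {m k : ι → Type*} [Fintype ι] [CommSemiring R]

/-- The Kronecker product of a finite family of matrices, with rows and columns indexed by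
dependent functions so that no order of the factors has to be chosen. -/
def piKronecker (A : ∀ l, Matrix (m l) (k l) R) : Matrix (∀ l, m l) (∀ l, k l) R :=
  Matrix.of fun i j => ∏ l, A l (i l) (j l)

lemma piKronecker_one [∀ l, DecidableEq (m l)] [DecidableEq (∀ l, m l)] :
    piKronecker (fun l => (1 : Matrix (m l) (m l) R)) = 1 := by
  ext i j
  simp [piKronecker, Matrix.one_apply, Fintype.prod_ite_zero, funext_iff]

end PiKronecker

section HilbertSchmidt

variable {𝕜 α m : Type*} [RCLike 𝕜]

lemma re_sq_le_norm_sq (z : 𝕜) : RCLike.re z ^ 2 ≤ ‖z‖ ^ 2 :=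
  sq_le_sq.2 ((RCLike.abs_re_le_norm z).trans (le_abs_self _))

lemma norm_sq_apply_le_of_posSemidef {A : Matrix m m 𝕜} (hA : A.PosSemidef) (i j : m) :
    ‖A i j‖ ^ 2 ≤ RCLike.re (A i i) * RCLike.re (A j j) := by
  have hminor : 0 ≤ A i i * A j j - A i j * A j i := by
    simpa only [det_fin_two, submatrix_apply, cons_val_zero, cons_val_one]
      using (hA.submatrix ![i, j]).det_nonneg
  have hdiag (l : m) : ((RCLike.re (A l l) : ℝ) : 𝕜) = A l l := hA.1.coe_re_apply_self l
  rw [← hA.1.apply j i, RCLike.star_def, RCLike.mul_conj, ← hdiag i, ← hdiag j] at hminor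
  exact sub_nonneg.1 (by exact_mod_cast hminor)

variable [Fintype m]

lemma ofReal_sum_norm_sq (v : m → 𝕜) : ((∑ i, ‖v i‖ ^ 2 : ℝ) : 𝕜) = star v ⬝ᵥ v := by
  simp [dotProduct, RCLike.conj_mul]

lemma sum_norm_sq_mulVec_of_conjTranspose_mul_self_eq_smul_one [Fintype α] [DecidableEq m]
    {S : Matrix α m 𝕜} {c : ℝ} (hS : Sᴴ * S = (c : 𝕜) • 1) (v : m → 𝕜) :
    ∑ a, ‖(S *ᵥ v) a‖ ^ 2 = c * ∑ p, ‖v p‖ ^ 2 := by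
  have h : star (S *ᵥ v) ⬝ᵥ (S *ᵥ v) = (c : 𝕜) * (star v ⬝ᵥ v) := by
    rw [star_mulVec, ← dotProduct_mulVec, mulVec_mulVec, hS, smul_mulVec, one_mulVec,
      dotProduct_smul, smul_eq_mul]
  rw [← ofReal_sum_norm_sq, ← ofReal_sum_norm_sq] at h
  exact_mod_cast h

lemma sum_norm_sq_le_re_trace_sq_of_posSemidef {A : Matrix m m 𝕜} (hA : A.PosSemidef) :
    ∑ i, ∑ j, ‖A i j‖ ^ 2 ≤ RCLike.re A.trace ^ 2 :=
  calc ∑ i, ∑ j, ‖A i j‖ ^ 2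
      ≤ ∑ i, ∑ j, RCLike.re (A i i) * RCLike.re (A j j) := by
        gcongr with i _ j _
        exact norm_sq_apply_le_of_posSemidef hA i j
    _ = RCLike.re A.trace ^ 2 := by
        simp only [← Finset.sum_mul_sum, Matrix.trace, Matrix.diag_apply, map_sum, sq]

lemma inv_card_mul_sum_re_trace_of_sum_eq_one {ι : Type*} [Fintype ι] [DecidableEq m] [Nonempty m]
    {K : ι → Matrix m m 𝕜} (hK : ∑ x, K x = 1) :
    (Fintype.card m : ℝ)⁻¹ * ∑ x, RCLike.re (K x).trace = 1 := by
  rw [← map_sum, ← Matrix.trace_sum, hK, Matrix.trace_one, RCLike.natCast_re]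
  exact inv_mul_cancel₀ (by simp)

end HilbertSchmidt

section OperatorFrame

variable {𝕜 α β m k : Type*} [RCLike 𝕜] [Fintype α] [Fintype β] [DecidableEq m] [DecidableEq k]

/-- A finite family of matrices is a tight frame with constant `c` for the Hilbert–Schmidt inner
product. This is encoded by the completeness relation between matrix entries, which passes to
tensor products factor by factor; the Parseval form is
`IsTightOperatorFrame.sum_norm_sq_trace_mul`. -/
def IsTightOperatorFrame (c : ℝ) (B : α → Matrix m k 𝕜) : Prop :=
  ∀ i j i' j', ∑ a, B a i j * star (B a i' j') = if i = i' ∧ j = j' then (c : 𝕜) else 0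

namespace IsTightOperatorFrame

variable {c : ℝ}

lemma comp_equiv {B : α → Matrix m k 𝕜} (hB : IsTightOperatorFrame c B) (e : β ≃ α) :
    IsTightOperatorFrame c (B ∘ e) := fun i j i' j' =>
  (e.sum_comp fun a => B a i j * star (B a i' j')).trans (hB i j i' j')

lemma pi {ι : Type*} [Fintype ι] [DecidableEq ι] {κ m k : ι → Type*}
    [∀ l, Fintype (κ l)] [∀ l, DecidableEq (m l)] [∀ l, DecidableEq (k l)]
    [DecidableEq (∀ l, m l)] [DecidableEq (∀ l, k l)]
    {c : ι → ℝ} {B : ∀ l, κ l → Matrix (m l) (k l) 𝕜}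
    (hB : ∀ l, IsTightOperatorFrame (c l) (B l)) :
    IsTightOperatorFrame (∏ l, c l) fun f : ∀ l, κ l => piKronecker fun l => B l (f l) := by
  intro i j i' j'
  calc ∑ f : ∀ l, κ l, (∏ l, B l (f l) (i l) (j l)) * star (∏ l, B l (f l) (i' l) (j' l))
      = ∏ l, ∑ a, B l a (i l) (j l) * star (B l a (i' l) (j' l)) := by
        simp only [Fintype.prod_sum, star_prod, Finset.prod_mul_distrib]
    _ = ∏ l, if i l = i' l ∧ j l = j' l then (c l : 𝕜) else 0 :=
        Finset.prod_congr rfl fun l _ => hB l _ _ _ _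
    _ = if i = i' ∧ j = j' then ((∏ l, c l : ℝ) : 𝕜) else 0 := by
        simp only [Fintype.prod_ite_zero, forall_and, funext_iff, RCLike.ofReal_prod]

lemma nonneg [Nonempty m] [Nonempty k] {B : α → Matrix m k 𝕜}
    (hB : IsTightOperatorFrame c B) : 0 ≤ c := by
  obtain ⟨i⟩ := ‹Nonempty m›
  obtain ⟨j⟩ := ‹Nonempty k›
  have h : ∑ a, ‖B a i j‖ ^ 2 = c := by
    have := hB i j i j
    simp only [RCLike.star_def, RCLike.mul_conj, and_self, if_true] at this
    exact_mod_cast this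
  exact h ▸ Finset.sum_nonneg fun a _ => sq_nonneg _

variable [Fintype m]

lemma sum_norm_sq_trace_mul [Fintype k] {B : α → Matrix m k 𝕜} (hB : IsTightOperatorFrame c B)
    (A : Matrix k m 𝕜) :
    ∑ a, ‖(A * B a).trace‖ ^ 2 = c * ∑ i, ∑ j, ‖A i j‖ ^ 2 := by
  let S : Matrix α (k × m) 𝕜 := Matrix.of fun a => vec (B a)
  have hS : Sᴴ * S = (c : 𝕜) • 1 := by
    ext ⟨j', i'⟩ ⟨j, i⟩
    simpa [S, Matrix.mul_apply, Matrix.one_apply, vec, mul_comm, and_comm, eq_comm]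
      using hB i j i' j'
  have htrace (a : α) : (A * B a).trace = (S *ᵥ vec Aᵀ) a := by
    rw [← Matrix.transpose_transpose A, ← vec_dotProduct_vec, dotProduct_comm]
    rfl
  simp only [htrace, sum_norm_sq_mulVec_of_conjTranspose_mul_self_eq_smul_one hS,
    Fintype.sum_prod_type, vec, Matrix.transpose_apply]

variable [DecidableEq α] {B : α → Matrix m m 𝕜} {a₀ : α}

lemma sum_erase_norm_sq_trace_mul_le (hB : IsTightOperatorFrame c B) (h₀ : B a₀ = 1)
    {A : Matrix m m 𝕜} (hA : A.PosSemidef) :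
    ∑ a ∈ Finset.univ.erase a₀, ‖(A * B a).trace‖ ^ 2 ≤ (c - 1) * RCLike.re A.trace ^ 2 := by
  rcases isEmpty_or_nonempty m with _ | _
  · simp [Matrix.trace]
  have hsplit : ‖A.trace‖ ^ 2 + ∑ a ∈ Finset.univ.erase a₀, ‖(A * B a).trace‖ ^ 2
      = c * ∑ i, ∑ j, ‖A i j‖ ^ 2 := by
    rw [← hB.sum_norm_sq_trace_mul, ← Finset.add_sum_erase _ _ (Finset.mem_univ a₀), h₀, mul_one]
  have hpurity : c * ∑ i, ∑ j, ‖A i j‖ ^ 2 ≤ c * RCLike.re A.trace ^ 2 :=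
    mul_le_mul_of_nonneg_left (sum_norm_sq_le_re_trace_sq_of_posSemidef hA) hB.nonneg
  linarith [re_sq_le_norm_sq A.trace]

end IsTightOperatorFrame

end OperatorFrame

section Pauli

lemma pauli1_false_false : pauli1 false false = 1 := by
  simp [pauli1]

lemma pauliOp_eq_piKronecker {n : ℕ} (a : PauliIdx n) :
    pauliOp a = piKronecker fun l => pauli1 (a.1 l) (a.2 l) := rfl

lemma pauliOp_pauliZero (n : ℕ) : pauliOp (pauliZero n) = 1 := by
  simp only [pauliOp_eq_piKronecker, pauliZero, pauli1_false_false, piKronecker_one]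

lemma isTightOperatorFrame_pauli1 :
    IsTightOperatorFrame 2 fun p : Bool × Bool => pauli1 p.1 p.2 := by
  intro i j i' j'
  rw [Fintype.sum_prod_type]
  fin_cases i <;> fin_cases j <;> fin_cases i' <;> fin_cases j' <;>
    simp [pauli1, sigmaX, sigmaZ] <;> norm_num

lemma isTightOperatorFrame_pauliOp (n : ℕ) :
    IsTightOperatorFrame (2 ^ n) (pauliOp : PauliIdx n → _) := by
  have h := IsTightOperatorFrame.pi fun _ : Fin n => isTightOperatorFrame_pauli1
  rw [Finset.prod_const, Finset.card_univ, Fintype.card_fin] at h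
  exact h.comp_equiv (Equiv.arrowProdEquivProdArrow (Fin n) (fun _ => Bool) fun _ => Bool).symm

end Pauli

/-- The last factor on the right is the total outcome probability at the maximally mixed state.
Norms replace the real parts because the `B a` need not be Hermitian. -/
theorem povm_fisher_diag_sum_bound_general {𝕜 ι α m : Type*} [RCLike 𝕜] [Fintype ι]
    [Fintype α] [DecidableEq α] [Fintype m] [DecidableEq m] {c : ℝ} {B : α → Matrix m m 𝕜}
    (hB : IsTightOperatorFrame c B) {a₀ : α} (h₀ : B a₀ = 1) {K : ι → Matrix m m 𝕜}
    (hpsd : ∀ x, (K x).PosSemidef) (htr : ∀ x, 0 < RCLike.re (K x).trace) :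
    ∑ a ∈ Finset.univ.erase a₀,
        (Fintype.card m : ℝ)⁻¹ * ∑ x, ‖(K x * B a).trace‖ ^ 2 / RCLike.re (K x).trace
      ≤ (c - 1) * ((Fintype.card m : ℝ)⁻¹ * ∑ x, RCLike.re (K x).trace) := by
  rw [← Finset.mul_sum, Finset.sum_comm, mul_left_comm, Finset.mul_sum _ _ (c - 1)]
  gcongr with x
  rw [← Finset.sum_div, div_le_iff₀ (htr x), mul_assoc, ← sq]
  exact hB.sum_erase_norm_sq_trace_mul_le h₀ (hpsd x)

/-- **Fisher information bound for single-copy POVMs at the maximally mixed state.**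
For any POVM `{Π_x}` on `ℂ^{2ⁿ}`, the diagonal Fisher information entries
`F_{aa} = 2^{−n} ∑_x (Tr[Π_x P_a])² / Tr[Π_x]` over nonzero Pauli indices satisfy
`∑_{a≠0} F_{aa} ≤ 2ⁿ − 1`. -/
theorem povm_fisher_diag_sum_bound (n : ℕ) (hn : 1 ≤ n)
    {ι : Type*} [Fintype ι]
    (K : ι → Matrix (Fin n → Fin 2) (Fin n → Fin 2) ℂ)
    (hpsd : ∀ x, (K x).PosSemidef)
    (hsum : ∑ x, K x = 1)
    (htr : ∀ x, 0 < ((K x).trace).re) :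
    (∑ a ∈ Finset.univ.erase (pauliZero n),
        ((2 : ℝ) ^ n)⁻¹ * ∑ x, ((K x * pauliOp a).trace).re ^ 2 / ((K x).trace).re)
      ≤ (2 : ℝ) ^ n - 1 := by
  have h := povm_fisher_diag_sum_bound_general (isTightOperatorFrame_pauliOp n)
    (pauliOp_pauliZero n) hpsd htr
  rw [inv_card_mul_sum_re_trace_of_sum_eq_one hsum, mul_one, Fintype.card_pi_const,
    Fintype.card_fin, Nat.cast_pow, Nat.cast_ofNat] at h
  refine h.trans' ?_
  gcongr ∑ a ∈ _, _ * ∑ x, ?_ with a _ x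
  exact div_le_div_of_nonneg_right (re_sq_le_norm_sq (K x * pauliOp a).trace) (htr x).le
end

section
/- Let n ≥ 1, set N := 4ⁿ, and let p : {0, …, N−1} → ℝ with p_a > 0 for all a and ∑_a p_a = 1. Let U be the N × N orthogonal matrix U_{ab} = 2^{−n}(−1)^{⟨[a]₂,[b]₂⟩}, let D be the diagonal matrix with entries D_{aa} = 1/(N p_a), and set F₀ := Uᵀ D U. Let F be the (N−1) × (N−1) principal submatrix of F₀ obtained by deleting the row and column with index 0. Then F is symmetric positive definite and its smallest eigenvalue satisfies λ_min(F) ≤ 1/(N p₍₂₎), where p₍₂₎ denotes the second-largest value among {p_a}. Equivalently, the largest eigenvalue of F⁻¹ satisfies λ_max(F⁻¹) ≥ N p₍₂₎ = 4ⁿ p₍₂₎. -/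
open Matrix Kronecker BigOperators ComplexOrder

/-- The normalized Walsh–Hadamard matrix `U_{ab} = 2^{−n} (−1)^{⟨[a]₂,[b]₂⟩}` with respect to
the symplectic pairing. -/
noncomputable def walshMatrix (n : ℕ) : Matrix (PauliIdx n) (PauliIdx n) ℝ :=
  Matrix.of fun a b => ((2 : ℝ) ^ n)⁻¹ * (-1) ^ sympl a b

/-- The full Fisher information matrix `F₀ = Uᵀ D U`, where
`D = diag(1/(N p_a))` with `N = 4ⁿ`. -/
noncomputable def fisherFull (n : ℕ) (p : PauliIdx n → ℝ) :
    Matrix (PauliIdx n) (PauliIdx n) ℝ :=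
  (walshMatrix n)ᵀ * Matrix.diagonal (fun a => 1 / ((4 : ℝ) ^ n * p a)) * walshMatrix n

/-- The reduced Fisher information matrix `F`: the principal submatrix of `F₀` obtained by
deleting the row and column indexed by `0`. -/
noncomputable def fisherReduced (n : ℕ) (p : PauliIdx n → ℝ) :
    Matrix {a : PauliIdx n // a ≠ pauliZero n} {a : PauliIdx n // a ≠ pauliZero n} ℝ :=
  (fisherFull n p).submatrix Subtype.val Subtype.val

/-!
Writing `D = diag d`, the quadratic form of `Uᴴ D U` is at most `c ‖x‖²` as soon as `U x` is
supported on the indices `a` with `d a ≤ c`. For `c = 1 / (4 ^ n * p a₁)` both `a₀` and `a₁` are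
such indices. Asking that `U x` be supported on `{a₀, a₁}` and that `x` vanish at the deleted
index imposes `N - 1` linear equations on `N` unknowns, so a nonzero such `x` exists. On it `F`
and `F₀` have the same quadratic form, and a quadratic form that is at most `c ‖x‖²` at one
nonzero vector forces an eigenvalue at most `c`.
-/

section Interlacing

variable {R 𝕜 ι κ : Type*} [Fintype ι] [Fintype κ]

theorem dotProduct_comp_of_injective [NonUnitalNonAssocSemiring R] {e : κ → ι}
    (he : Function.Injective e) {x y : ι → R} (hxy : ∀ i ∉ Set.range e, x i * y i = 0) :
    (x ∘ e) ⬝ᵥ (y ∘ e) = x ⬝ᵥ y :=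
  Fintype.sum_of_injective e he _ _ hxy fun _ => rfl

theorem submatrix_mulVec_comp_of_injective [NonUnitalNonAssocSemiring R] {l m : Type*}
    (A : Matrix m ι R) (r : l → m) {e : κ → ι} (he : Function.Injective e) {x : ι → R}
    (hx : ∀ i ∉ Set.range e, x i = 0) :
    A.submatrix r e *ᵥ (x ∘ e) = (A *ᵥ x) ∘ r :=
  funext fun k => dotProduct_comp_of_injective he (x := A (r k)) fun i hi => by
    rw [hx i hi, mul_zero]

variable [RCLike 𝕜]

theorem posDef_sub_algebraMap_of_lt_eigenvalues [DecidableEq ι] {A : Matrix ι ι 𝕜}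
    (hA : A.IsHermitian) {c : ℝ} (hc : ∀ i, c < hA.eigenvalues i) :
    (A - algebraMap ℝ (Matrix ι ι 𝕜) c).PosDef := by
  have hAc : (A - algebraMap ℝ (Matrix ι ι 𝕜) c).IsHermitian :=
    IsSelfAdjoint.sub hA (IsSelfAdjoint.algebraMap _ (.all c))
  refine hAc.posDef_iff_eigenvalues_pos.2 fun i => ?_
  have hmem : hAc.eigenvalues i + c ∈ spectrum ℝ A := by
    rw [spectrum.add_mem_iff, neg_add_eq_sub]
    exact hAc.eigenvalues_mem_spectrum_real i
  rw [hA.spectrum_real_eq_range_eigenvalues] at hmem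
  obtain ⟨j, hj⟩ := hmem
  linarith [hc j]

theorem exists_eigenvalues_le_of_re_dotProduct_mulVec_le [DecidableEq ι] {A : Matrix ι ι 𝕜}
    (hA : A.IsHermitian) {x : ι → 𝕜} (hx : x ≠ 0) {c : ℝ}
    (hxc : RCLike.re (star x ⬝ᵥ (A *ᵥ x)) ≤ c * RCLike.re (star x ⬝ᵥ x)) :
    ∃ i, hA.eigenvalues i ≤ c := by
  by_contra! hc
  have hpos := (posDef_sub_algebraMap_of_lt_eigenvalues hA hc).re_dotProduct_pos hx
  rw [Algebra.algebraMap_eq_smul_one, sub_mulVec, smul_mulVec, one_mulVec, dotProduct_sub,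
    dotProduct_smul, map_sub, RCLike.smul_re] at hpos
  linarith

theorem exists_eigenvalues_submatrix_le_of_finrank_lt [DecidableEq κ] {V : Type*} [AddCommGroup V]
    [Module 𝕜 V] [FiniteDimensional 𝕜 V] {A : Matrix ι ι 𝕜} {e : κ → ι} (he : Function.Injective e)
    (hA : (A.submatrix e e).IsHermitian) (f : (ι → 𝕜) →ₗ[𝕜] V)
    (hf : Module.finrank 𝕜 V < Fintype.card κ) {c : ℝ}
    (hc : ∀ x, f x = 0 → RCLike.re (star x ⬝ᵥ (A *ᵥ x)) ≤ c * RCLike.re (star x ⬝ᵥ x)) :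
    ∃ k, hA.eigenvalues k ≤ c := by
  have hker : LinearMap.ker (f ∘ₗ Function.ExtendByZero.linearMap 𝕜 e) ≠ ⊥ :=
    LinearMap.ker_ne_bot_of_finrank_lt (by rwa [Module.finrank_fintype_fun_eq_card])
  obtain ⟨y, hfy, hy⟩ := Submodule.exists_mem_ne_zero_of_ne_bot hker
  let x : ι → 𝕜 := Function.extend e y 0
  have hfx : f x = 0 := hfy
  have hxe : x ∘ e = y := Function.extend_comp he y 0
  have hx : ∀ i ∉ Set.range e, x i = 0 := Function.extend_apply' (f := e) y 0
  have hcompress : ∀ w : ι → 𝕜, star y ⬝ᵥ (w ∘ e) = star x ⬝ᵥ w := fun w => by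
    rw [← hxe]
    exact dotProduct_comp_of_injective (x := star x) he fun i hi => by
      rw [Pi.star_apply, hx i hi, star_zero, zero_mul]
  refine exists_eigenvalues_le_of_re_dotProduct_mulVec_le hA hy ?_
  calc RCLike.re (star y ⬝ᵥ (A.submatrix e e *ᵥ y))
      = RCLike.re (star x ⬝ᵥ (A *ᵥ x)) := by
        rw [← hcompress, ← submatrix_mulVec_comp_of_injective A e he hx, hxe]
    _ ≤ c * RCLike.re (star x ⬝ᵥ x) := hc x hfx
    _ = c * RCLike.re (star y ⬝ᵥ y) := by rw [← hcompress, hxe]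

theorem re_dotProduct_diagonal_mulVec_le [DecidableEq ι] {d : ι → ℝ} {c : ℝ} {y : ι → 𝕜}
    (hd : ∀ i, y i ≠ 0 → d i ≤ c) :
    RCLike.re (star y ⬝ᵥ (diagonal (fun i => (d i : 𝕜)) *ᵥ y)) ≤
      c * RCLike.re (star y ⬝ᵥ y) := by
  simp only [dotProduct, mulVec_diagonal, map_sum, Finset.mul_sum]
  refine Finset.sum_le_sum fun i _ => ?_
  rcases eq_or_ne (y i) 0 with hi | hi
  · simp [hi]
  · have hnorm : star (y i) * y i = ((‖y i‖ ^ 2 : ℝ) : 𝕜) := by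
      rw [← starRingEnd_apply, RCLike.conj_mul, RCLike.ofReal_pow]
    rw [Pi.star_apply, mul_left_comm, hnorm, RCLike.re_ofReal_mul, RCLike.ofReal_re]
    exact mul_le_mul_of_nonneg_right (hd i hi) (sq_nonneg _)

theorem exists_eigenvalues_submatrix_le_of_card_lt [DecidableEq ι] [DecidableEq κ]
    {A U : Matrix ι ι 𝕜} (hU : U ∈ unitaryGroup ι 𝕜) {d : ι → ℝ}
    (hA : A = Uᴴ * diagonal (fun i => (d i : 𝕜)) * U)
    {e : κ → ι} (he : Function.Injective e) (hAe : (A.submatrix e e).IsHermitian) {s : Finset ι}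
    (hs : Fintype.card ι < Fintype.card κ + s.card) {c : ℝ} (hd : ∀ i ∈ s, d i ≤ c) :
    ∃ k, hAe.eigenvalues k ≤ c := by
  let f : (ι → 𝕜) →ₗ[𝕜] ((sᶜ : Finset ι) → 𝕜) :=
    LinearMap.funLeft 𝕜 𝕜 Subtype.val ∘ₗ U.mulVecLin
  have hf : Module.finrank 𝕜 ((sᶜ : Finset ι) → 𝕜) < Fintype.card κ := by
    rw [Module.finrank_fintype_fun_eq_card, Fintype.card_coe, Finset.card_compl]
    have hscard := s.card_le_univ
    omega
  refine exists_eigenvalues_submatrix_le_of_finrank_lt he hAe f hf fun x hfx => ?_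
  have hd' : ∀ i, (U *ᵥ x) i ≠ 0 → d i ≤ c := fun i hi =>
    hd i <| by_contra fun his => hi (congrFun hfx ⟨i, Finset.mem_compl.2 his⟩)
  have hUx : star x ⬝ᵥ x = star (U *ᵥ x) ⬝ᵥ (U *ᵥ x) := by
    rw [star_mulVec, ← dotProduct_mulVec, mulVec_mulVec, ← star_eq_conjTranspose,
      mem_unitaryGroup_iff'.1 hU, one_mulVec]
  rw [hUx, hA, ← mulVec_mulVec, ← mulVec_mulVec, dotProduct_mulVec, ← star_mulVec]
  exact re_dotProduct_diagonal_mulVec_le hd'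

end Interlacing

section Walsh

variable {R ι : Type*} [CommRing R] [Fintype ι]

/-- The Walsh function of `a` at `b`, that is `(-1) ^ ∑ k, a k * b k`. The symplectic sign of two
Pauli indices is a product of two of these, and the product over bits makes sums of Walsh
functions factor. -/
def walshSign (a b : ι → Bool) : R :=
  ∏ k, if a k && b k then -1 else 1

theorem sum_walshSign_mul_walshSign [DecidableEq ι] (a b : ι → Bool) :
    ∑ c, walshSign a c * walshSign b c = if a = b then (2 : R) ^ Fintype.card ι else 0 := by
  have hbit : ∀ s t : Bool, ∑ u : Bool, (if s && u then (-1 : R) else 1) *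
      (if t && u then -1 else 1) = if s = t then 2 else 0 := by
    rintro (_ | _) (_ | _) <;> norm_num
  simp only [walshSign, ← Finset.prod_mul_distrib]
  rw [← Fintype.prod_sum fun k u => (if a k && u then (-1 : R) else 1) *
    (if b k && u then -1 else 1)]
  simp only [hbit]
  split_ifs with hab
  · simp [hab]
  · obtain ⟨k, hk⟩ := Function.ne_iff.1 hab
    exact Finset.prod_eq_zero (Finset.mem_univ k) (if_neg hk)

theorem neg_one_pow_sympl {n : ℕ} (a b : PauliIdx n) :
    (-1 : R) ^ sympl a b = walshSign a.1 b.2 * walshSign a.2 b.1 := by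
  rw [sympl, ← Finset.prod_pow_eq_pow_sum, walshSign, walshSign, ← Finset.prod_mul_distrib]
  refine Finset.prod_congr rfl fun k _ => ?_
  cases a.1 k <;> cases a.2 k <;> cases b.1 k <;> cases b.2 k <;> norm_num

theorem sum_neg_one_pow_sympl_mul {n : ℕ} (a b : PauliIdx n) :
    ∑ c, (-1 : R) ^ sympl a c * (-1) ^ sympl b c = if a = b then 4 ^ n else 0 := by
  calc ∑ c, (-1 : R) ^ sympl a c * (-1) ^ sympl b c
      = ∑ x : Fin n → Bool, ∑ z : Fin n → Bool,
          (walshSign a.2 x * walshSign b.2 x) * (walshSign a.1 z * walshSign b.1 z) := by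
        rw [Fintype.sum_prod_type]
        simp only [neg_one_pow_sympl]
        exact Finset.sum_congr rfl fun x _ => Finset.sum_congr rfl fun z _ => by ring
    _ = (if a.2 = b.2 then 2 ^ n else 0) * (if a.1 = b.1 then 2 ^ n else 0) := by
        rw [← Finset.sum_mul_sum, sum_walshSign_mul_walshSign, sum_walshSign_mul_walshSign,
          Fintype.card_fin]
    _ = if a = b then 4 ^ n else 0 := by
        simp only [ite_zero_mul_ite_zero, ← mul_pow, Prod.ext_iff, and_comm]
        norm_num

end Walsh

theorem walshMatrix_mem_orthogonalGroup (n : ℕ) :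
    walshMatrix n ∈ orthogonalGroup (PauliIdx n) ℝ := by
  rw [mem_orthogonalGroup_iff]
  ext a b
  calc (walshMatrix n * (walshMatrix n)ᵀ) a b
      = ((2 : ℝ) ^ n)⁻¹ * (2 ^ n)⁻¹ * ∑ c, (-1) ^ sympl a c * (-1) ^ sympl b c := by
        rw [mul_apply, Finset.mul_sum]
        exact Finset.sum_congr rfl fun c _ => mul_mul_mul_comm _ _ _ _
    _ = (4 ^ n)⁻¹ * if a = b then 4 ^ n else 0 := by
        rw [sum_neg_one_pow_sympl_mul, ← mul_inv, ← mul_pow]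
        norm_num
    _ = (1 : Matrix (PauliIdx n) (PauliIdx n) ℝ) a b := by
        rw [mul_ite, mul_zero, inv_mul_cancel₀ (by positivity), one_apply]

theorem fisherFull_isSymm (n : ℕ) (p : PauliIdx n → ℝ) : (fisherFull n p).IsSymm := by
  rw [IsSymm, fisherFull, transpose_mul, transpose_mul, transpose_transpose, diagonal_transpose,
    Matrix.mul_assoc]

theorem fisherFull_posDef {n : ℕ} {p : PauliIdx n → ℝ} (hp : ∀ a, 0 < p a) :
    (fisherFull n p).PosDef := by
  have hD : (diagonal fun a => 1 / ((4 : ℝ) ^ n * p a)).PosDef :=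
    posDef_diagonal_iff.2 fun a => one_div_pos.2 (mul_pos (by positivity) (hp a))
  have hU : Function.Injective (walshMatrix n).mulVec :=
    mulVec_injective_of_isUnit <| IsUnit.of_mul_eq_one _ <|
      (mem_orthogonalGroup_iff _ _).1 (walshMatrix_mem_orthogonalGroup n)
  exact hD.conjTranspose_mul_mul_same hU

theorem fisher_reduced_min_eigenvalue_bound_general {n : ℕ} {p : PauliIdx n → ℝ}
    (hp : ∀ a, 0 < p a) {a₀ a₁ : PauliIdx n} (hne : a₁ ≠ a₀) (hle : p a₁ ≤ p a₀) :
    (fisherReduced n p).IsSymm ∧ (fisherReduced n p).PosDef ∧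
    ∀ hF : (fisherReduced n p).IsHermitian,
      ∃ i, hF.eigenvalues i ≤ 1 / ((4 : ℝ) ^ n * p a₁) := by
  refine ⟨(fisherFull_isSymm n p).submatrix _,
    (fisherFull_posDef hp).submatrix Subtype.val_injective, fun hF => ?_⟩
  have hcard : Fintype.card (PauliIdx n) <
      Fintype.card {a : PauliIdx n // a ≠ pauliZero n} + ({a₀, a₁} : Finset (PauliIdx n)).card := by
    rw [Finset.card_pair hne.symm, Fintype.card_subtype_compl, Fintype.card_subtype_eq]
    omega
  refine exists_eigenvalues_submatrix_le_of_card_lt (walshMatrix_mem_orthogonalGroup n)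
    (A := fisherFull n p) rfl Subtype.val_injective hF hcard fun a ha => ?_
  have hpa : p a₁ ≤ p a := by
    obtain rfl | rfl : a = a₀ ∨ a = a₁ := by simpa using ha
    exacts [hle, le_rfl]
  exact one_div_le_one_div_of_le (mul_pos (by positivity) (hp a₁))
    (mul_le_mul_of_nonneg_left hpa (by positivity))

/-- **Eigenvalue interlacing bound for the reduced Fisher information matrix.** Let `p` be a
strictly positive probability distribution on Pauli indices, `a₀` an index attaining the
largest value of `p` and `a₁ ≠ a₀` an index attaining the largest value of `p` among the
remaining indices (so `p a₁` is the second-largest value `p₍₂₎`). Then the reduced Fisher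
matrix `F` is symmetric positive definite and has an eigenvalue `≤ 1/(4ⁿ p₍₂₎)`, i.e. its
smallest eigenvalue satisfies `λ_min(F) ≤ 1/(4ⁿ p₍₂₎)` (equivalently
`λ_max(F⁻¹) ≥ 4ⁿ p₍₂₎`). -/
theorem fisher_reduced_min_eigenvalue_bound (n : ℕ) (hn : 1 ≤ n)
    (p : PauliIdx n → ℝ) (hp : ∀ a, 0 < p a) (hpsum : ∑ a, p a = 1)
    (a₀ : PauliIdx n) (ha₀ : ∀ a, p a ≤ p a₀)
    (a₁ : PauliIdx n) (ha₁ : a₁ ≠ a₀) (ha₁max : ∀ a, a ≠ a₀ → p a ≤ p a₁) :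
    (fisherReduced n p).IsSymm ∧ (fisherReduced n p).PosDef ∧
    ∀ hF : (fisherReduced n p).IsHermitian,
      ∃ i, hF.eigenvalues i ≤ 1 / ((4 : ℝ) ^ n * p a₁) :=
  fisher_reduced_min_eigenvalue_bound_general hp ha₁ (ha₀ a₁)
end
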